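/- For every positive integer N, ∫_{U(N)} det(1 − U) · conj( det(1 − ∧³U) ) dU = ⌊N/3⌋ + 1, where dU is the Haar probability measure on the unitary group U(N). In particular, for N = 3g the integral equals g + 1. -/

import Mathlib

open MeasureTheory Matrix

noncomputable section

/-- `det(1 - ∧³U) = ∏_{i₁<i₂<i₃} (1 - x_{i₁} x_{i₂} x_{i₃})`, where `x₁,…,x_N` are the
eigenvalues of `U` (the roots, with multiplicity, of its characteristic polynomial). -/
def detOneSubWedgeThree (N : ℕ) (U : Matrix.unitaryGroup (Fin N) ℂ) : ℂ :=
  ((((Matrix.charpoly (U : Matrix (Fin N) (Fin N) ℂ)).roots).powersetCard 3).map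
    (fun t => 1 - t.prod)).prod

namespace UnitaryIntegral

open Equiv Finset

lemma exists_row_not_mem_of_not_comp_perm {α : Type*} {k : ℕ} {l i : Fin k → α}
    (hl : Function.Injective l) (σ : Perm (Fin k)) (hi : ∀ τ : Perm (Fin k), l ∘ τ ≠ i) :
    ∃ x, ∀ b, (i ∘ σ) b ≠ l x := by
  by_contra! h
  choose τ hτ using h
  have hinj : Function.Injective τ := fun a b hab => hl (by rw [← hτ, ← hτ, hab])
  let e := Equiv.ofBijective τ (Finite.injective_iff_bijective.mp hinj)
  refine hi (e.trans σ).symm (funext fun b => ?_)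
  obtain ⟨a, rfl⟩ := (e.trans σ).surjective b
  rw [Function.comp_apply, Equiv.symm_apply_apply]
  exact (hτ a).symm

variable {n : Type*} [Fintype n] [DecidableEq n]

section Integration

instance compactSpace_unitaryGroup : CompactSpace (unitaryGroup n ℂ) := by
  have hclosed : IsClosed (unitaryGroup n ℂ : Set (Matrix n n ℂ)) := isClosed_unitary
  have hbox : IsCompact
      (Set.univ.pi fun _ : n => Set.univ.pi fun _ : n => Metric.closedBall (0 : ℂ) 1) :=
    isCompact_univ_pi fun _ => isCompact_univ_pi fun _ => isCompact_closedBall _ _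
  refine isCompact_iff_compactSpace.mp (hbox.of_isClosed_subset hclosed fun U hU => ?_)
  simp only [Set.mem_univ_pi, mem_closedBall_zero_iff]
  exact entry_norm_bound_of_unitary hU

variable [MeasurableSpace (unitaryGroup n ℂ)] [BorelSpace (unitaryGroup n ℂ)]
  {μ : Measure (unitaryGroup n ℂ)}

lemma integrable_of_continuous [IsFiniteMeasure μ] {f : unitaryGroup n ℂ → ℂ}
    (hf : Continuous f) : Integrable f μ :=
  hf.integrable_of_hasCompactSupport (HasCompactSupport.of_compactSpace f)

lemma integral_mul_left_eq
    (hinv : ∀ V : unitaryGroup n ℂ, MeasurePreserving (fun U => V * U) μ μ)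
    {f : unitaryGroup n ℂ → ℂ} (hf : Continuous f) (V : unitaryGroup n ℂ) :
    ∫ U, f (V * U) ∂μ = ∫ U, f U ∂μ := by
  have h := integral_map (hinv V).measurable.aemeasurable
    (hf.measurable.aestronglyMeasurable (μ := Measure.map (fun U => V * U) μ))
  rw [(hinv V).map_eq] at h
  exact h.symm

end Integration

/-- The diagonal unitary matrix with prescribed entries of modulus one. -/
def diagonalUnitary (d : n → ℂ) (hd : ∀ i, ‖d i‖ = 1) : unitaryGroup n ℂ :=
  ⟨diagonal d, by
    rw [mem_unitaryGroup_iff, star_eq_conjTranspose, diagonal_conjTranspose, diagonal_mul_diagonal,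
      ← diagonal_one]
    congr 1
    ext i
    simp [Complex.mul_conj, Complex.normSq_eq_norm_sq, hd i]⟩

/-- The unitary matrix of a permutation. -/
def permUnitary (π : Perm n) : unitaryGroup n ℂ :=
  ⟨π.permMatrix ℂ, by
    rw [mem_unitaryGroup_iff, star_eq_conjTranspose, conjTranspose_permMatrix, ← permMatrix_mul]
    simp⟩

lemma diagonalUnitary_mul_apply (d : n → ℂ) (hd : ∀ i, ‖d i‖ = 1) (U : unitaryGroup n ℂ)
    (i j : n) : (diagonalUnitary d hd * U : unitaryGroup n ℂ) i j = d i * U i j := by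
  change (diagonal d * U.1) i j = _
  simp [diagonal_mul]

lemma permUnitary_mul_apply (π : Perm n) (U : unitaryGroup n ℂ) (i j : n) :
    (permUnitary π * U : unitaryGroup n ℂ) i j = U (π i) j := by
  change ((π.permMatrix ℂ * U.1 : Matrix n n ℂ)) i j = _
  simp [PEquiv.toMatrix_toPEquiv_mul]

section Minors

variable {A : Type*} [Fintype A] {B : Type*} [Fintype B]

lemma continuous_entry (i j : n) : Continuous fun U : unitaryGroup n ℂ => U i j :=
  (continuous_apply j).comp ((continuous_apply i).comp continuous_subtype_val)

/-- The minor with rows `r` and columns `c`. -/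
def minorOf [DecidableEq A] (r c : A → n) (U : unitaryGroup n ℂ) : ℂ := (U.1.submatrix r c).det

/-- The monomial in the matrix entries with rows `r` and columns `c`. -/
def entryMonomial (r c : A → n) (U : unitaryGroup n ℂ) : ℂ := ∏ a, U (r a) (c a)

lemma continuous_minorOf [DecidableEq A] (r c : A → n) : Continuous (minorOf r c) :=
  Continuous.matrix_det (continuous_subtype_val.matrix_submatrix r c)

lemma continuous_entryMonomial (r c : A → n) : Continuous (entryMonomial r c) :=
  continuous_finsetProd _ fun _ _ => continuous_entry _ _

lemma continuous_minorOf_mul_conj [DecidableEq A] (r c : A → n) (r' c' : B → n) :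
    Continuous fun U => minorOf r c U * starRingEnd ℂ (entryMonomial r' c' U) :=
  (continuous_minorOf r c).mul (Complex.continuous_conj.comp (continuous_entryMonomial r' c'))

lemma minorOf_diagonalUnitary_mul [DecidableEq A] (d : n → ℂ) (hd : ∀ i, ‖d i‖ = 1) (r c : A → n)
    (U : unitaryGroup n ℂ) :
    minorOf r c (diagonalUnitary d hd * U) = (∏ a, d (r a)) * minorOf r c U := by
  rw [minorOf, minorOf, ← det_mul_column]
  congr 1
  ext a b
  exact diagonalUnitary_mul_apply d hd U (r a) (c b)

lemma entryMonomial_diagonalUnitary_mul (d : n → ℂ) (hd : ∀ i, ‖d i‖ = 1) (r c : A → n)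
    (U : unitaryGroup n ℂ) :
    entryMonomial r c (diagonalUnitary d hd * U) = (∏ a, d (r a)) * entryMonomial r c U := by
  simp only [entryMonomial, diagonalUnitary_mul_apply, prod_mul_distrib]

lemma minorOf_permUnitary_mul [DecidableEq A] (π : Perm n) (r c : A → n) (U : unitaryGroup n ℂ) :
    minorOf r c (permUnitary π * U) = minorOf (π ∘ r) c U := by
  rw [minorOf, minorOf]
  congr 1
  ext a b
  exact permUnitary_mul_apply π U (r a) (c b)

lemma entryMonomial_permUnitary_mul (π : Perm n) (r c : A → n) (U : unitaryGroup n ℂ) :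
    entryMonomial r c (permUnitary π * U) = entryMonomial (π ∘ r) c U := by
  simp only [entryMonomial, permUnitary_mul_apply, Function.comp]

lemma minorOf_eq_zero_of_not_injective [DecidableEq A] {r : A → n} (hr : ¬ Function.Injective r)
    (c : A → n) (U : unitaryGroup n ℂ) : minorOf r c U = 0 := by
  simp only [Function.Injective, not_forall] at hr
  obtain ⟨a, b, hab, hne⟩ := hr
  exact det_zero_of_row_eq hne (by ext x; simp [hab])

lemma sum_entry_mul_conj (U : unitaryGroup n ℂ) (i j : n) :
    ∑ m, U m i * starRingEnd ℂ (U m j) = if i = j then 1 else 0 := by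
  have h := congrFun (congrFun (UnitaryGroup.star_mul_self U) j) i
  simp only [star_eq_conjTranspose, mul_apply, conjTranspose_apply, one_apply] at h
  simp only [eq_comm (a := i)]
  rw [← h]
  exact sum_congr rfl fun m _ => mul_comm _ _

/-- Orthonormality of the columns of the compound matrices of a unitary matrix. -/
lemma sum_minorOf_mul_conj_entryMonomial [DecidableEq A] {c : A → n} (hc : Function.Injective c)
    (κ : Perm A) (U : unitaryGroup n ℂ) :
    ∑ m : A → n, minorOf m c U * starRingEnd ℂ (entryMonomial m (c ∘ κ) U) =
      ((Perm.sign κ : ℤ) : ℂ) := by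
  have key (m : A → n) : minorOf m c U * starRingEnd ℂ (entryMonomial m (c ∘ κ) U) =
      ∑ ρ : Perm A, ((Perm.sign ρ : ℤ) : ℂ) *
        ∏ a, (U (m a) (c (ρ a)) * starRingEnd ℂ (U (m a) (c (κ a)))) := by
    rw [minorOf, ← det_transpose, det_apply', sum_mul]
    refine sum_congr rfl fun ρ _ => ?_
    simp [entryMonomial, map_prod, prod_mul_distrib, mul_assoc]
  simp_rw [key]
  rw [sum_comm]
  simp_rw [← mul_sum]
  have hprod (ρ : Perm A) : ∑ m : A → n,
      ∏ a, (U (m a) (c (ρ a)) * starRingEnd ℂ (U (m a) (c (κ a)))) =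
        if ρ = κ then 1 else 0 := by
    rw [← Fintype.prod_sum fun (a : A) (x : n) => U x (c (ρ a)) * starRingEnd ℂ (U x (c (κ a)))]
    simp_rw [sum_entry_mul_conj, hc.eq_iff]
    by_cases h : ρ = κ
    · simp [h]
    · rw [if_neg h]
      obtain ⟨a, ha⟩ := not_forall.mp fun h' => h (Equiv.ext h')
      exact prod_eq_zero (mem_univ a) (if_neg ha)
  simp_rw [hprod]
  simp

lemma exists_perm_comp_eq {r s : A → n} (hr : Function.Injective r) (hs : Function.Injective s) :
    ∃ π : Perm n, π ∘ r = s := by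
  let e := ((Equiv.ofInjective r hr).symm.trans (Equiv.ofInjective s hs))
  refine ⟨e.extendSubtype, funext fun a => ?_⟩
  rw [Function.comp_apply, e.extendSubtype_apply_of_mem _ ⟨a, rfl⟩]
  simp [e]

variable [MeasurableSpace (unitaryGroup n ℂ)] [BorelSpace (unitaryGroup n ℂ)]
  {μ : Measure (unitaryGroup n ℂ)}

/-- A minor is orthogonal to every monomial missing one of its rows. -/
lemma integral_minorOf_mul_conj_eq_zero [DecidableEq A]
    (hinv : ∀ V : unitaryGroup n ℂ, MeasurePreserving (fun U => V * U) μ μ)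
    {r : A → n} (hr : Function.Injective r) (c : A → n) (r' c' : B → n)
    (x : A) (hx : ∀ b, r' b ≠ r x) :
    ∫ U, minorOf r c U * starRingEnd ℂ (entryMonomial r' c' U) ∂μ = 0 := by
  let d : n → ℂ := fun i => if i = r x then -1 else 1
  have hd : ∀ i, ‖d i‖ = 1 := fun i => by simp only [d]; split_ifs <;> simp
  have h := integral_mul_left_eq hinv (continuous_minorOf_mul_conj r c r' c')
    (diagonalUnitary d hd)
  have h1 : ∏ a, d (r a) = -1 := by simp [d, hr.eq_iff]
  have h2 : ∏ b, d (r' b) = 1 := by simp [d, hx]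
  simp only [minorOf_diagonalUnitary_mul, entryMonomial_diagonalUnitary_mul, h1, h2,
    one_mul, neg_mul, integral_neg] at h
  linear_combination (-1 / 2 : ℂ) * h

/-- The inner product of a minor with a monomial supported on the same rows. -/
lemma integral_minorOf_mul_conj_entryMonomial [DecidableEq A] [IsProbabilityMeasure μ]
    (hinv : ∀ V : unitaryGroup n ℂ, MeasurePreserving (fun U => V * U) μ μ)
    {r : A → n} (hr : Function.Injective r) (κ : Perm A) :
    (Fintype.card (A ↪ n) : ℂ) *
      ∫ U, minorOf r r U * starRingEnd ℂ (entryMonomial r (r ∘ κ) U) ∂μ =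
      ((Perm.sign κ : ℤ) : ℂ) := by
  classical
  have hint (m : A → n) : Integrable
      (fun U => minorOf m r U * starRingEnd ℂ (entryMonomial m (r ∘ κ) U)) μ :=
    integrable_of_continuous (continuous_minorOf_mul_conj _ _ _ _)
  have hsum : ∑ m : A → n, ∫ U, minorOf m r U * starRingEnd ℂ (entryMonomial m (r ∘ κ) U) ∂μ =
      ((Perm.sign κ : ℤ) : ℂ) := by
    rw [← integral_finsetSum _ fun m _ => hint m]
    simp_rw [sum_minorOf_mul_conj_entryMonomial hr κ]
    simp
  rw [← hsum, ← sum_filter_of_ne (p := Function.Injective) (s := univ)]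
  · have hconst : ∀ m ∈ univ.filter (Function.Injective : (A → n) → Prop),
        ∫ U, minorOf m r U * starRingEnd ℂ (entryMonomial m (r ∘ κ) U) ∂μ =
        ∫ U, minorOf r r U * starRingEnd ℂ (entryMonomial r (r ∘ κ) U) ∂μ := by
      intro m hm
      obtain ⟨π, rfl⟩ := exists_perm_comp_eq hr (mem_filter.mp hm).2
      have h := integral_mul_left_eq hinv (continuous_minorOf_mul_conj r r r (r ∘ κ))
        (permUnitary π)
      simpa only [minorOf_permUnitary_mul, entryMonomial_permUnitary_mul] using h
    rw [sum_congr rfl hconst, sum_const, nsmul_eq_mul, ← Fintype.card_subtype,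
      Fintype.card_congr (Equiv.subtypeInjectiveEquivEmbedding A n)]
  · intro m _ hm
    by_contra hinj
    exact hm (by simp [minorOf_eq_zero_of_not_injective hinj])

end Minors

section PermTrace

variable {A : Type*} [Fintype A]

lemma entryMonomial_comp_perm (r c : A → n) (π : Perm A) (U : unitaryGroup n ℂ) :
    entryMonomial (r ∘ π) (c ∘ π) U = entryMonomial r c U :=
  Equiv.prod_comp π fun a => U (r a) (c a)

/-- The trace of `U^{⊗ A}` composed with the permutation `σ` of the tensor factors. -/
def permTrace [DecidableEq A] (σ : Perm A) (U : unitaryGroup n ℂ) : ℂ :=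
  ∑ i : A → n, entryMonomial (i ∘ σ) i U

/-- The sum of the principal minors of order `k`. -/
def sumMinors (k : ℕ) (U : unitaryGroup n ℂ) : ℂ :=
  ∑ s ∈ univ.powersetCard k, (U.1.submatrix (Subtype.val : s → n) (Subtype.val : s → n)).det

lemma continuous_permTrace [DecidableEq A] (σ : Perm A) :
    Continuous (permTrace σ : unitaryGroup n ℂ → ℂ) :=
  continuous_finsetSum _ fun _ _ => continuous_entryMonomial _ _

lemma continuous_sumMinors (k : ℕ) : Continuous (sumMinors k : unitaryGroup n ℂ → ℂ) :=
  continuous_finsetSum _ fun _ _ =>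
    Continuous.matrix_det (continuous_subtype_val.matrix_submatrix _ _)

lemma factorial_mul_sumMinors (k : ℕ) (U : unitaryGroup n ℂ) :
    (k.factorial : ℂ) * sumMinors k U = ∑ l : Fin k → n, minorOf l l U := by
  classical
  let ι := Σ s : {s : Finset n // s ∈ univ.powersetCard k}, (Fin k ≃ s.1)
  let e : ι → (Fin k → n) := fun p => Subtype.val ∘ p.2
  have hrange (p : ι) : Set.range (e p) = p.1.1 := by
    simp [e, Set.range_comp]
  have he : Function.Injective e := by
    rintro ⟨⟨s, hs⟩, τ⟩ ⟨⟨t, ht⟩, τ'⟩ h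
    have hst : s = t := by
      have h1 := hrange ⟨⟨s, hs⟩, τ⟩
      rw [h, hrange] at h1
      exact (Finset.coe_injective h1).symm
    subst hst
    have : τ = τ' := Equiv.ext fun a => Subtype.ext (congrFun h a)
    rw [this]
  have hsum := Fintype.sum_of_injective e he
    (fun p : ι => (U.1.submatrix (Subtype.val : p.1.1 → n) (Subtype.val : p.1.1 → n)).det)
    (fun l => minorOf l l U)
    (by
      intro l hl
      refine minorOf_eq_zero_of_not_injective (fun hinj => hl ?_) l U
      have hmem (a : Fin k) : l a ∈ univ.image l := mem_image_of_mem l (mem_univ a)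
      refine ⟨⟨⟨univ.image l, ?_⟩, Equiv.ofBijective (fun a => ⟨l a, hmem a⟩) ⟨?_, ?_⟩⟩, rfl⟩
      · simp [mem_powersetCard, card_image_of_injective _ hinj]
      · intro a b hab
        exact hinj (congrArg Subtype.val hab)
      · rintro ⟨x, hx⟩
        obtain ⟨a, -, rfl⟩ := mem_image.mp hx
        exact ⟨a, rfl⟩)
    (by
      intro p
      exact (det_submatrix_equiv_self p.2
        (U.1.submatrix (Subtype.val : p.1.1 → n) (Subtype.val : p.1.1 → n))).symm)
  rw [← hsum, Fintype.sum_sigma, sumMinors, ← sum_coe_sort, mul_sum]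
  refine sum_congr rfl fun s _ => ?_
  have hs : Fintype.card s.1 = k := by
    simpa using (mem_powersetCard.mp s.2).2
  change _ = ∑ _ : Fin k ≃ s.1,
    (U.1.submatrix (Subtype.val : s.1 → n) (Subtype.val : s.1 → n)).det
  rw [sum_const, card_univ, Fintype.card_equiv (Fintype.equivOfCardEq (by simp [hs])),
    Fintype.card_fin, nsmul_eq_mul]

lemma sumMinors_eq_sum_permTrace (k : ℕ) (U : unitaryGroup n ℂ) :
    (k.factorial : ℂ) * sumMinors k U =
      ∑ σ : Perm (Fin k), ((Perm.sign σ : ℤ) : ℂ) * permTrace σ U := by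
  simp_rw [factorial_mul_sumMinors, permTrace, mul_sum]
  rw [sum_comm]
  refine sum_congr rfl fun l _ => ?_
  rw [minorOf, det_apply']
  rfl

variable [MeasurableSpace (unitaryGroup n ℂ)] [BorelSpace (unitaryGroup n ℂ)]
  {μ : Measure (unitaryGroup n ℂ)}

lemma integral_minorOf_mul_conj_permTrace [IsProbabilityMeasure μ]
    (hinv : ∀ V : unitaryGroup n ℂ, MeasurePreserving (fun U => V * U) μ μ)
    {k : ℕ} {l : Fin k → n} (hl : Function.Injective l) (σ : Perm (Fin k)) :
    (Fintype.card (Fin k ↪ n) : ℂ) *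
      ∫ U, minorOf l l U * starRingEnd ℂ (permTrace σ U) ∂μ =
      k.factorial * ((Perm.sign σ : ℤ) : ℂ) := by
  have hexp : ∫ U, minorOf l l U * starRingEnd ℂ (permTrace σ U) ∂μ =
      ∑ i : Fin k → n, ∫ U, minorOf l l U * starRingEnd ℂ (entryMonomial (i ∘ σ) i U) ∂μ := by
    rw [← integral_finsetSum _ fun i _ =>
      integrable_of_continuous (continuous_minorOf_mul_conj l l (i ∘ σ) i)]
    simp only [permTrace, map_sum, mul_sum]
  have hperm := Fintype.sum_of_injective (fun τ : Perm (Fin k) => l ∘ τ)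
    (fun τ τ' h => Equiv.ext fun a => hl (congrFun h a))
    (fun τ : Perm (Fin k) =>
      ∫ U, minorOf l l U * starRingEnd ℂ (entryMonomial l (l ∘ (τ * (τ * σ)⁻¹ : Perm (Fin k))) U) ∂μ)
    (fun i => ∫ U, minorOf l l U * starRingEnd ℂ (entryMonomial (i ∘ σ) i U) ∂μ)
    (by
      intro i hi
      obtain ⟨x, hx⟩ := exists_row_not_mem_of_not_comp_perm hl σ fun τ h => hi ⟨τ, h⟩
      exact integral_minorOf_mul_conj_eq_zero hinv hl l _ _ x hx)
    (by
      intro τ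
      congr 1
      ext U
      rw [← entryMonomial_comp_perm l _ (τ * σ)]
      congr 3
      ext a
      simp)
  rw [hexp, ← hperm, mul_sum]
  simp_rw [integral_minorOf_mul_conj_entryMonomial hinv hl]
  have hsign (τ : Perm (Fin k)) : Perm.sign (τ * (τ * σ)⁻¹) = Perm.sign σ := by
    rw [_root_.mul_inv_rev, Perm.sign_mul, Perm.sign_mul, Perm.sign_inv, Perm.sign_inv,
      mul_left_comm, Int.units_mul_self, mul_one]
  simp_rw [hsign]
  rw [sum_const, card_univ, Fintype.card_perm, Fintype.card_fin, nsmul_eq_mul]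

/-- Inner products of elementary symmetric functions and permutation traces of equal degree. -/
lemma integral_sumMinors_mul_conj_permTrace [IsProbabilityMeasure μ]
    (hinv : ∀ V : unitaryGroup n ℂ, MeasurePreserving (fun U => V * U) μ μ)
    {k : ℕ} (hk : k ≤ Fintype.card n) (σ : Perm (Fin k)) :
    ∫ U, sumMinors k U * starRingEnd ℂ (permTrace σ U) ∂μ = ((Perm.sign σ : ℤ) : ℂ) := by
  classical
  have hcard : (Fintype.card (Fin k ↪ n) : ℂ) ≠ 0 := by
    rw [Nat.cast_ne_zero, Fintype.card_embedding_eq, Fintype.card_fin]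
    exact (Nat.descFactorial_pos.mpr hk).ne'
  have hfac : (k.factorial : ℂ) ≠ 0 := by exact_mod_cast k.factorial_ne_zero
  have hexp : (k.factorial : ℂ) * ∫ U, sumMinors k U * starRingEnd ℂ (permTrace σ U) ∂μ =
      ∑ l : Fin k → n, ∫ U, minorOf l l U * starRingEnd ℂ (permTrace σ U) ∂μ := by
    have hint (l : Fin k → n) :
        Integrable (fun U => minorOf l l U * starRingEnd ℂ (permTrace σ U)) μ :=
      integrable_of_continuous
        ((continuous_minorOf l l).mul (Complex.continuous_conj.comp (continuous_permTrace σ)))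
    rw [← integral_finsetSum _ fun l _ => hint l, ← integral_const_mul]
    simp_rw [← mul_assoc, factorial_mul_sumMinors, sum_mul]
  have hinj : ∑ l : Fin k → n, ∫ U, minorOf l l U * starRingEnd ℂ (permTrace σ U) ∂μ =
      ∑ l : Fin k → n with Function.Injective l,
        ∫ U, minorOf l l U * starRingEnd ℂ (permTrace σ U) ∂μ := by
    refine (sum_filter_of_ne fun l _ hne => ?_).symm
    by_contra h
    exact hne (by simp [minorOf_eq_zero_of_not_injective h])
  have hconst : ∀ l ∈ univ.filter (Function.Injective : (Fin k → n) → Prop),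
      ∫ U, minorOf l l U * starRingEnd ℂ (permTrace σ U) ∂μ =
      k.factorial * ((Perm.sign σ : ℤ) : ℂ) / Fintype.card (Fin k ↪ n) := fun l hl => by
    rw [eq_div_iff hcard, mul_comm,
      integral_minorOf_mul_conj_permTrace hinv (mem_filter.mp hl).2 σ]
  rw [hinj, sum_congr rfl hconst, sum_const, nsmul_eq_mul, ← Fintype.card_subtype,
    Fintype.card_congr (Equiv.subtypeInjectiveEquivEmbedding (Fin k) n),
    mul_div_cancel₀ _ hcard] at hexp
  exact mul_left_cancel₀ hfac hexp

/-- Class functions of different degrees are orthogonal. -/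
lemma integral_sumMinors_mul_conj_permTrace_of_ne
    (hinv : ∀ V : unitaryGroup n ℂ, MeasurePreserving (fun U => V * U) μ μ)
    {k m : ℕ} (hkm : k ≠ m) (σ : Perm (Fin m)) :
    ∫ U, sumMinors k U * starRingEnd ℂ (permTrace σ U) ∂μ = 0 := by
  have hz : IsPrimitiveRoot _ (k + m + 1) := Complex.isPrimitiveRoot_exp (k + m + 1) (by omega)
  set z := Complex.exp (2 * Real.pi * Complex.I / (k + m + 1 : ℕ))
  have hnorm : ‖z‖ = 1 := hz.norm'_eq_one (by omega)
  have hcont : Continuous fun U : unitaryGroup n ℂ =>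
      sumMinors k U * starRingEnd ℂ (permTrace σ U) :=
    (continuous_sumMinors k).mul (Complex.continuous_conj.comp (continuous_permTrace σ))
  have h := integral_mul_left_eq hinv hcont
    (diagonalUnitary (fun _ => z) fun _ => hnorm)
  have h1 (U : unitaryGroup n ℂ) :
      sumMinors k (diagonalUnitary (fun _ => z) (fun _ => hnorm) * U) = z ^ k * sumMinors k U := by
    have hfac : (k.factorial : ℂ) ≠ 0 := by exact_mod_cast k.factorial_ne_zero
    refine mul_left_cancel₀ hfac ?_
    rw [mul_left_comm, factorial_mul_sumMinors, factorial_mul_sumMinors, mul_sum]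
    simp [minorOf_diagonalUnitary_mul]
  have h2 (U : unitaryGroup n ℂ) :
      permTrace σ (diagonalUnitary (fun _ => z) (fun _ => hnorm) * U) = z ^ m * permTrace σ U := by
    simp [permTrace, entryMonomial_diagonalUnitary_mul, mul_sum]
  have h3 (U : unitaryGroup n ℂ) : z ^ k * sumMinors k U *
      starRingEnd ℂ (z ^ m * permTrace σ U) =
      (z ^ k * starRingEnd ℂ (z ^ m)) * (sumMinors k U * starRingEnd ℂ (permTrace σ U)) := by
    rw [map_mul]; ring
  simp only [h1, h2, h3, integral_const_mul] at h
  by_contra hne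
  have h4 : z ^ k * starRingEnd ℂ (z ^ m) = 1 := mul_right_cancel₀ hne (by rw [h, one_mul])
  have h5 : z ^ m * starRingEnd ℂ (z ^ m) = 1 := by
    rw [Complex.mul_conj, Complex.normSq_eq_norm_sq, norm_pow, hnorm]
    simp
  have h6 : starRingEnd ℂ (z ^ m) ≠ 0 := right_ne_zero_of_mul (h5 ▸ one_ne_zero)
  exact hkm (hz.pow_inj (by omega) (by omega) (mul_right_cancel₀ h6 (h4.trans h5.symm)))

end PermTrace

section Specialization

open Polynomial

lemma permTrace_permCongr {A B : Type*} [Fintype A] [DecidableEq A] [Fintype B] [DecidableEq B]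
    (e : A ≃ B) (σ : Perm A) (U : unitaryGroup n ℂ) :
    permTrace (e.permCongr σ) U = permTrace σ U := by
  refine Fintype.sum_equiv (e.arrowCongr (Equiv.refl n)).symm _ _ fun i => ?_
  refine (Fintype.prod_equiv e _ _ fun a => ?_).symm
  simp [Equiv.permCongr_apply]

lemma permTrace_mul_permTrace {A B : Type*} [Fintype A] [DecidableEq A] [Fintype B]
    [DecidableEq B] (σ : Perm A) (τ : Perm B) (U : unitaryGroup n ℂ) :
    permTrace σ U * permTrace τ U = permTrace (Perm.sumCongr σ τ) U := by
  simp only [permTrace]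
  rw [Fintype.sum_mul_sum, ← Fintype.sum_prod_type']
  refine (Fintype.sum_equiv (Equiv.sumArrowEquivProdArrow A B n) _ _ fun i => ?_).symm
  simp [entryMonomial, Fintype.prod_sum_type]

/-- The permutation traces, paired with their image under the sign specialization
`p_r ↦ (-1)^(r-1) X^r` of symmetric functions. -/
def permTracePairs (n : Type*) [Fintype n] [DecidableEq n] :
    Submonoid ((unitaryGroup n ℂ → ℂ) × ℂ[X]) where
  carrier := {p | ∃ (k : ℕ) (σ : Perm (Fin k)),
    p = (permTrace σ, C ((Perm.sign σ : ℤ) : ℂ) * X ^ k)}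
  one_mem' := ⟨0, 1, by ext <;> simp [permTrace, entryMonomial]⟩
  mul_mem' := by
    rintro _ _ ⟨k, σ, rfl⟩ ⟨m, τ, rfl⟩
    refine ⟨k + m, finSumFinEquiv.permCongr (Perm.sumCongr σ τ), Prod.ext ?_ ?_⟩
    · ext U
      simp [permTrace_permCongr, permTrace_mul_permTrace]
    · simp only [Prod.mk_mul_mk, Perm.sign_permCongr, Perm.sign_sumCongr, Units.val_mul,
        Int.cast_mul, C_mul]
      ring

/-- The algebra spanned by permutation traces paired with their sign specialization. -/
def signSpecialization (n : Type*) [Fintype n] [DecidableEq n] :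
    Subalgebra ℂ ((unitaryGroup n ℂ → ℂ) × ℂ[X]) :=
  Algebra.adjoin ℂ (permTracePairs n)

lemma sumMinors_mem_signSpecialization (k : ℕ) :
    ((sumMinors k, X ^ k) : (unitaryGroup n ℂ → ℂ) × ℂ[X]) ∈ signSpecialization n := by
  have hfac : (k.factorial : ℂ) ≠ 0 := by exact_mod_cast k.factorial_ne_zero
  have hsq (σ : Perm (Fin k)) :
      ((Perm.sign σ : ℤ) : ℂ) * ((Perm.sign σ : ℤ) : ℂ) = 1 := by
    rw [← Int.cast_mul, ← Units.val_mul, Int.units_mul_self]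
    simp
  have heq : ((sumMinors k, X ^ k) : (unitaryGroup n ℂ → ℂ) × ℂ[X]) =
      (k.factorial : ℂ)⁻¹ • ∑ σ : Perm (Fin k), ((Perm.sign σ : ℤ) : ℂ) •
        ((permTrace σ, C ((Perm.sign σ : ℤ) : ℂ) * X ^ k) :
          (unitaryGroup n ℂ → ℂ) × ℂ[X]) := by
    refine Prod.ext ?_ ?_
    · ext U
      simp only [Prod.smul_fst, Prod.fst_sum, Pi.smul_apply, Finset.sum_apply, smul_eq_mul]
      rw [← sumMinors_eq_sum_permTrace, inv_mul_cancel_left₀ hfac]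
    · simp only [Prod.smul_snd, Prod.snd_sum, smul_eq_C_mul, ← mul_assoc, ← C_mul, hsq]
      rw [sum_const, card_univ, Fintype.card_perm, Fintype.card_fin, nsmul_eq_mul, C_1, one_mul,
        ← C_eq_natCast, ← mul_assoc, ← C_mul, inv_mul_cancel₀ hfac, C_1, one_mul]
  rw [heq]
  refine Subalgebra.smul_mem _ (Subalgebra.sum_mem _ fun σ _ => Subalgebra.smul_mem _ ?_ _) _
  exact Algebra.subset_adjoin (show _ ∈ permTracePairs n from ⟨k, σ, rfl⟩)

lemma det_one_sub_eq_sum_sumMinors (U : unitaryGroup n ℂ) :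
    (1 - U.1).det = ∑ k ∈ range (Fintype.card n + 1), (-1) ^ k * sumMinors k U := by
  have h := eval_charpoly U.1 1
  rw [map_one] at h
  rw [← h, eval_eq_sum_range, charpoly_natDegree_eq_dim,
    ← sum_range_reflect]
  refine sum_congr rfl fun k hk => ?_
  have hk' : k ≤ Fintype.card n := Nat.lt_succ_iff.mp (mem_range.mp hk)
  rw [Nat.add_sub_cancel, charpoly_coeff_eq_sum_minors U.1 k hk', one_pow, mul_one, sumMinors]

variable [MeasurableSpace (unitaryGroup n ℂ)] [BorelSpace (unitaryGroup n ℂ)]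
  {μ : Measure (unitaryGroup n ℂ)} [IsProbabilityMeasure μ]

lemma integral_det_one_sub_mul_conj_permTrace
    (hinv : ∀ V : unitaryGroup n ℂ, MeasurePreserving (fun U => V * U) μ μ)
    {m : ℕ} (σ : Perm (Fin m)) :
    ∫ U : unitaryGroup n ℂ, (1 - U.1).det * starRingEnd ℂ (permTrace σ U) ∂μ =
      if m ≤ Fintype.card n then (-1) ^ m * ((Perm.sign σ : ℤ) : ℂ) else 0 := by
  have hint (k : ℕ) : Integrable (fun U : unitaryGroup n ℂ =>
      (-1) ^ k * (sumMinors k U * starRingEnd ℂ (permTrace σ U))) μ :=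
    integrable_of_continuous (continuous_const.mul
      ((continuous_sumMinors k).mul (Complex.continuous_conj.comp (continuous_permTrace σ))))
  simp_rw [det_one_sub_eq_sum_sumMinors, sum_mul, mul_assoc]
  rw [integral_finsetSum _ fun k _ => hint k]
  simp_rw [integral_const_mul]
  have hne (k : ℕ) (hk : k ≠ m) :
      (-1) ^ k * ∫ U : unitaryGroup n ℂ, sumMinors k U * starRingEnd ℂ (permTrace σ U) ∂μ = 0 := by
    rw [integral_sumMinors_mul_conj_permTrace_of_ne hinv hk σ, mul_zero]
  split_ifs with hm
  · rw [sum_eq_single_of_mem m (mem_range.mpr (by omega)) fun k _ => hne k,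
      integral_sumMinors_mul_conj_permTrace hinv hm]
  · exact sum_eq_zero fun k hk => hne k (by rintro rfl; exact hm (by simpa [Nat.lt_succ_iff] using hk))

lemma integral_det_one_sub_mul_conj_of_mem_signSpecialization
    (hinv : ∀ V : unitaryGroup n ℂ, MeasurePreserving (fun U => V * U) μ μ)
    {p : (unitaryGroup n ℂ → ℂ) × ℂ[X]} (hp : p ∈ signSpecialization n) :
    ∫ U : unitaryGroup n ℂ, (1 - U.1).det * starRingEnd ℂ (p.1 U) ∂μ =
      ∑ k ∈ range (Fintype.card n + 1), (-1) ^ k * starRingEnd ℂ (p.2.coeff k) := by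
  have hspan : p ∈ Submodule.span ℂ (permTracePairs n : Set ((unitaryGroup n ℂ → ℂ) × ℂ[X])) := by
    have h := Algebra.adjoin_eq_span ℂ (permTracePairs n : Set ((unitaryGroup n ℂ → ℂ) × ℂ[X]))
    rw [Submonoid.closure_eq] at h
    rw [← h]
    exact hp
  have hdet : Continuous fun U : unitaryGroup n ℂ => (1 - U.1).det :=
    Continuous.matrix_det (continuous_const.sub continuous_subtype_val)
  have hint {f : unitaryGroup n ℂ → ℂ} (hf : Continuous f) :
      Integrable (fun U : unitaryGroup n ℂ => (1 - U.1).det * starRingEnd ℂ (f U)) μ :=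
    integrable_of_continuous (hdet.mul (Complex.continuous_conj.comp hf))
  clear hp
  suffices Continuous p.1 ∧ _ from this.2
  induction hspan using Submodule.span_induction with
  | mem p hp =>
    obtain ⟨m, σ, rfl⟩ := hp
    refine ⟨continuous_permTrace σ, ?_⟩
    rw [integral_det_one_sub_mul_conj_permTrace hinv σ]
    simp [coeff_X_pow, apply_ite (starRingEnd ℂ)]
  | zero => exact ⟨continuous_const, by simp⟩
  | add p q _ _ hp hq =>
    refine ⟨hp.1.add hq.1, ?_⟩
    simp only [Prod.fst_add, Prod.snd_add, Pi.add_apply, coeff_add, map_add, mul_add,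
      sum_add_distrib]
    rw [integral_add (hint hp.1) (hint hq.1), hp.2, hq.2]
  | smul c p _ hp =>
    refine ⟨hp.1.const_smul c, ?_⟩
    simp only [Prod.smul_fst, Prod.smul_snd, Pi.smul_apply, coeff_smul, smul_eq_mul, map_mul,
      mul_left_comm _ (starRingEnd ℂ c)]
    rw [integral_const_mul, hp.2, mul_sum]

end Specialization

section Eigenvalues

open Polynomial

/-- Newton's identities for families all of whose first power sums are `-1`. -/
lemma aeval_esymm_of_power_sums_eq_neg_one {σ : Type*} [Fintype σ] (c : σ → ℂ) {M : ℕ}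
    (hc : ∀ r, 1 ≤ r → r ≤ M → ∑ i, c i ^ r = -1) {m : ℕ} (hm : m ≤ M) :
    MvPolynomial.aeval c (MvPolynomial.esymm σ ℂ m) = (-1) ^ m := by
  induction m using Nat.strong_induction_on with
  | _ m ih =>
    rcases Nat.eq_zero_or_pos m with rfl | hpos
    · simp
    have hnewton := congrArg (MvPolynomial.aeval c) (MvPolynomial.mul_esymm_eq_sum σ ℂ m)
    simp only [map_mul, map_natCast, map_pow, map_neg, map_one, map_sum] at hnewton
    have hterm : ∀ a ∈ {a ∈ antidiagonal m | a.1 < m},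
        (-1 : ℂ) ^ a.1 * MvPolynomial.aeval c (MvPolynomial.esymm σ ℂ a.1) *
          MvPolynomial.aeval c (MvPolynomial.psum σ ℂ a.2) = -1 := by
      intro a ha
      simp only [mem_filter, HasAntidiagonal.mem_antidiagonal] at ha
      rw [ih a.1 ha.2 (by omega), MvPolynomial.psum, map_sum]
      simp only [map_pow, MvPolynomial.aeval_X]
      rw [hc a.2 (by omega) (by omega), ← mul_pow]
      simp
    have hcard : #{a ∈ antidiagonal m | a.1 < m} = m := by
      have himage : {a ∈ antidiagonal m | a.1 < m} = (range m).image fun i => (i, m - i) := by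
        ext ⟨i, j⟩
        simp only [mem_filter, HasAntidiagonal.mem_antidiagonal, mem_image, mem_range,
          Prod.mk.injEq]
        constructor
        · rintro ⟨h, h'⟩
          exact ⟨i, h', rfl, by omega⟩
        · rintro ⟨i, h, rfl, rfl⟩
          omega
      rw [himage, card_image_of_injective _ fun i j h => congrArg Prod.fst h, card_range]
    rw [sum_congr rfl hterm, sum_const, hcard, nsmul_eq_mul] at hnewton
    have hm0 : (m : ℂ) ≠ 0 := by exact_mod_cast hpos.ne'
    refine mul_left_cancel₀ hm0 ?_
    rw [hnewton, pow_succ]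
    ring

variable {N : ℕ}

lemma exists_eigenvalues (U : unitaryGroup (Fin N) ℂ) :
    ∃ x : Fin N → ℂ, (univ : Finset (Fin N)).val.map x = U.1.charpoly.roots := by
  have hcard : U.1.charpoly.roots.toList.length = N := by
    rw [Multiset.length_toList, splits_iff_card_roots.mp (IsAlgClosed.splits _),
      charpoly_natDegree_eq_dim, Fintype.card_fin]
  refine ⟨fun i => U.1.charpoly.roots.toList.get (i.cast hcard.symm), ?_⟩
  rw [Fin.univ_val_map]
  refine Eq.trans (congrArg _ ?_) (Multiset.coe_toList U.1.charpoly.roots)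
  refine List.ext_getElem (by simp [hcard]) fun i h1 h2 => by simp

/-- An enumeration of the eigenvalues with multiplicity. -/
def eigenvalue (U : unitaryGroup (Fin N) ℂ) : Fin N → ℂ := (exists_eigenvalues U).choose

lemma map_eigenvalue (U : unitaryGroup (Fin N) ℂ) :
    (univ : Finset (Fin N)).val.map (eigenvalue U) = U.1.charpoly.roots :=
  (exists_eigenvalues U).choose_spec

lemma aeval_eigenvalue_esymm (U : unitaryGroup (Fin N) ℂ) {k : ℕ} (hk : k ≤ N) :
    MvPolynomial.aeval (eigenvalue U) (MvPolynomial.esymm (Fin N) ℂ k) = sumMinors k U := by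
  have hcard := splits_iff_card_roots.mp (IsAlgClosed.splits U.1.charpoly)
  have hdeg : U.1.charpoly.natDegree = N := by simp
  have h := coeff_eq_esymm_roots_of_card hcard (k := N - k) (by omega)
  have hminors := charpoly_coeff_eq_sum_minors U.1 k (by simpa using hk)
  rw [Fintype.card_fin, h, (charpoly_monic U.1).leadingCoeff, one_mul, hdeg,
    Nat.sub_sub_self hk] at hminors
  rw [MvPolynomial.aeval_esymm_eq_multiset_esymm, map_eigenvalue, sumMinors]
  exact mul_left_cancel₀ (pow_ne_zero k (neg_ne_zero.mpr one_ne_zero)) hminors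

/-- The symmetric polynomial `∏_{|t| = 3} (1 - ∏_{i ∈ t} X_i)`. -/
def wedgeThreePolynomial (N : ℕ) : MvPolynomial (Fin N) ℂ :=
  ∏ t ∈ (univ : Finset (Fin N)).powersetCard 3, (1 - ∏ i ∈ t, MvPolynomial.X i)

lemma wedgeThreePolynomial_isSymmetric (N : ℕ) : (wedgeThreePolynomial N).IsSymmetric := by
  intro e
  simp only [wedgeThreePolynomial, map_prod, map_sub, map_one, MvPolynomial.rename_X]
  refine prod_equiv e.finsetCongr (fun t => by simp [mem_powersetCard]) fun t _ => ?_
  simp [Equiv.finsetCongr_apply, prod_map]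

lemma aeval_eigenvalue_wedgeThreePolynomial (U : unitaryGroup (Fin N) ℂ) :
    MvPolynomial.aeval (eigenvalue U) (wedgeThreePolynomial N) = detOneSubWedgeThree N U := by
  rw [detOneSubWedgeThree, ← map_eigenvalue, Multiset.powersetCard_map, Multiset.map_map,
    wedgeThreePolynomial, map_prod, Finset.prod, ← Finset.map_val_val_powersetCard,
    Multiset.map_map]
  congr 1
  refine Multiset.map_congr rfl fun t _ => ?_
  simp only [Function.comp_apply, map_sub, map_one, map_prod, MvPolynomial.aeval_X]
  rfl

lemma sum_pow_primitiveRoot {ζ : ℂ} (hζ : IsPrimitiveRoot ζ (N + 1)) {r : ℕ} (hr : 1 ≤ r)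
    (hrN : r ≤ N) : ∑ j : Fin N, (ζ ^ (j.1 + 1)) ^ r = -1 := by
  have hne : ζ ^ r ≠ 1 := hζ.pow_ne_one_of_pos_of_lt (by omega) (by omega)
  have hgeom : ∑ j ∈ range (N + 1), (ζ ^ r) ^ j = 0 := by
    rw [geom_sum_eq hne, ← pow_mul, mul_comm r, pow_mul, hζ.pow_eq_one, one_pow, sub_self,
      zero_div]
  rw [sum_range_succ', pow_zero] at hgeom
  rw [Fin.sum_univ_eq_sum_range (fun j => (ζ ^ (j + 1)) ^ r)]
  simp_rw [← pow_mul, mul_comm _ r, pow_mul]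
  linear_combination hgeom

end Eigenvalues
section Evaluation

open Polynomial

variable {N : ℕ}

/-- The eigenvalues of `U`, paired with the point `-ζ^(j+1) X` of the sign specialization. -/
def specializationPoint (N : ℕ) (ζ : ℂ) (j : Fin N) :
    (unitaryGroup (Fin N) ℂ → ℂ) × ℂ[X] :=
  (fun U => eigenvalue U j, -(C (ζ ^ (j.1 + 1)) * X))

lemma aeval_specializationPoint (ζ : ℂ) (p : MvPolynomial (Fin N) ℂ) :
    MvPolynomial.aeval (specializationPoint N ζ) p =
      (fun U => MvPolynomial.aeval (eigenvalue U) p,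
        MvPolynomial.aeval (fun j : Fin N => -(C (ζ ^ (j.1 + 1)) * X)) p) := by
  refine Prod.ext (funext fun U => ?_) ?_
  · exact MvPolynomial.comp_aeval_apply (specializationPoint N ζ)
      ((Pi.evalAlgHom ℂ (fun _ : unitaryGroup (Fin N) ℂ => ℂ) U).comp (AlgHom.fst ℂ _ ℂ[X])) p
  · exact MvPolynomial.comp_aeval_apply (specializationPoint N ζ)
      (AlgHom.snd ℂ (unitaryGroup (Fin N) ℂ → ℂ) ℂ[X]) p

lemma aeval_esymm_neg_mul_X {σ : Type*} [Fintype σ] (c : σ → ℂ) (r : ℕ) :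
    MvPolynomial.aeval (fun j => -(C (c j) * X : ℂ[X])) (MvPolynomial.esymm σ ℂ r) =
      C ((-1) ^ r * MvPolynomial.aeval c (MvPolynomial.esymm σ ℂ r)) * X ^ r := by
  simp only [MvPolynomial.esymm, map_sum, map_prod, MvPolynomial.aeval_X, C_mul, mul_sum, sum_mul]
  refine sum_congr rfl fun t ht => ?_
  rw [prod_neg, prod_mul_distrib, prod_const, (mem_powersetCard.mp ht).2]
  simp [mul_assoc]

lemma aeval_specializationPoint_esymm_mem {ζ : ℂ} (hζ : IsPrimitiveRoot ζ (N + 1)) {r : ℕ}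
    (hr : r ≤ N) :
    MvPolynomial.aeval (specializationPoint N ζ) (MvPolynomial.esymm (Fin N) ℂ r) ∈
      signSpecialization (Fin N) := by
  have h := sumMinors_mem_signSpecialization (n := Fin N) r
  rw [aeval_specializationPoint, aeval_esymm_neg_mul_X,
    aeval_esymm_of_power_sums_eq_neg_one _ (fun s => sum_pow_primitiveRoot hζ) hr, ← mul_pow]
  simpa [aeval_eigenvalue_esymm _ hr] using h

lemma aeval_specializationPoint_mem {ζ : ℂ} (hζ : IsPrimitiveRoot ζ (N + 1))
    {p : MvPolynomial (Fin N) ℂ} (hp : p.IsSymmetric) :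
    MvPolynomial.aeval (specializationPoint N ζ) p ∈ signSpecialization (Fin N) := by
  obtain ⟨q, hq⟩ := MvPolynomial.esymmAlgHom_fin_surjective ℂ (le_refl N)
    ⟨p, (MvPolynomial.mem_symmetricSubalgebra p).mpr hp⟩
  have hpq := congrArg Subtype.val hq
  rw [MvPolynomial.esymmAlgHom_apply] at hpq
  simp only at hpq
  rw [← hpq, MvPolynomial.comp_aeval_apply]
  have hle : (MvPolynomial.aeval fun i : Fin N => MvPolynomial.aeval (specializationPoint N ζ)
      (MvPolynomial.esymm (Fin N) ℂ (i + 1))).range ≤ signSpecialization (Fin N) := by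
    rw [← Algebra.adjoin_range_eq_range_aeval, Algebra.adjoin_le_iff]
    rintro _ ⟨i, rfl⟩
    exact aeval_specializationPoint_esymm_mem hζ i.2
  exact hle ⟨q, rfl⟩

lemma coeff_prod_one_add_C_mul_X {σ : Type*} [Fintype σ] (c : σ → ℂ) (m : ℕ) :
    (∏ i, (1 + C (c i) * X)).coeff m =
      MvPolynomial.aeval c (MvPolynomial.esymm σ ℂ m) := by
  classical
  rw [prod_one_add, finsetSum_coeff, MvPolynomial.esymm, map_sum, powersetCard_eq_filter,
    sum_filter]
  refine sum_congr rfl fun t _ => ?_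
  rw [prod_mul_distrib, prod_const, ← map_prod, coeff_C_mul_X_pow]
  simp [eq_comm]

/-- The products `∏_{j ∈ t} ζ^(j+1)` over three-element sets `t`. -/
def tripleProduct (N : ℕ) (ζ : ℂ) (t : {t // t ∈ (univ : Finset (Fin N)).powersetCard 3}) : ℂ :=
  ∏ j ∈ t.1, ζ ^ (j.1 + 1)

lemma sum_tripleProduct_pow {ζ : ℂ} (hζ : IsPrimitiveRoot ζ (N + 1)) {r : ℕ} (hr : 1 ≤ r)
    (hrN : r ≤ N / 3) : ∑ t, tripleProduct N ζ t ^ r = -1 := by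
  have h := aeval_esymm_of_power_sums_eq_neg_one (fun j : Fin N => (ζ ^ (j.1 + 1)) ^ r) (M := 3)
    (fun s hs hs3 => by
      simp_rw [← pow_mul _ r s]
      exact sum_pow_primitiveRoot hζ (Nat.mul_pos hr hs)
        ((Nat.mul_le_mul hrN hs3).trans (Nat.div_mul_le_self N 3))) le_rfl
  rw [MvPolynomial.esymm, map_sum, ← sum_attach] at h
  simp only [map_prod, MvPolynomial.aeval_X, prod_pow] at h
  rw [univ_eq_attach]
  simp only [tripleProduct]
  rw [h]
  norm_num

lemma aeval_wedgeThreePolynomial (ζ : ℂ) :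
    MvPolynomial.aeval (fun j : Fin N => -(C (ζ ^ (j.1 + 1)) * X)) (wedgeThreePolynomial N) =
      expand ℂ 3 (∏ t, (1 + C (tripleProduct N ζ t) * X)) := by
  rw [wedgeThreePolynomial, map_prod, ← prod_attach, map_prod, univ_eq_attach]
  refine prod_congr rfl fun t _ => ?_
  simp only [map_sub, map_one, map_prod, MvPolynomial.aeval_X, map_add, map_mul, expand_C,
    expand_X, tripleProduct]
  rw [prod_neg, prod_mul_distrib, prod_const, (mem_powersetCard.mp t.2).2]
  ring

lemma sum_coeff_aeval_wedgeThreePolynomial {ζ : ℂ} (hζ : IsPrimitiveRoot ζ (N + 1)) :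
    ∑ k ∈ range (N + 1), (-1) ^ k * starRingEnd ℂ ((MvPolynomial.aeval
      (fun j : Fin N => -(C (ζ ^ (j.1 + 1)) * X)) (wedgeThreePolynomial N)).coeff k) =
      ((N / 3 : ℕ) : ℂ) + 1 := by
  have hterm : ∀ k ∈ range (N + 1), (-1) ^ k * starRingEnd ℂ ((MvPolynomial.aeval
      (fun j : Fin N => -(C (ζ ^ (j.1 + 1)) * X)) (wedgeThreePolynomial N)).coeff k) =
      if 3 ∣ k then 1 else 0 := by
    intro k hk
    rw [aeval_wedgeThreePolynomial, coeff_expand (by norm_num)]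
    split_ifs with h
    · obtain ⟨m, rfl⟩ := h
      have hm : m ≤ N / 3 := by
        have := mem_range.mp hk
        omega
      rw [Nat.mul_div_cancel_left m (by norm_num), coeff_prod_one_add_C_mul_X,
        aeval_esymm_of_power_sums_eq_neg_one _ (fun r => sum_tripleProduct_pow hζ) hm, pow_mul]
      simp [← mul_pow]
      norm_num [← mul_pow]
    · simp
  rw [sum_congr rfl hterm, sum_range_succ', sum_boole, Nat.card_multiples]
  simp

end Evaluation


end UnitaryIntegral

/-- **Theorem 1.5 (matrix integral).** For the Haar probability measure on `U(N)`
(a left-invariant Borel probability measure),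
`∫_{U(N)} det(1-U) · conj(det(1-∧³U)) dU = ⌊N/3⌋ + 1`; in particular for `N = 3g`
the integral is `g + 1`. -/
theorem integral_det_one_sub_mul_conj_det_wedge_three
    (N : ℕ) (hN : 0 < N)
    [MeasurableSpace (Matrix.unitaryGroup (Fin N) ℂ)]
    [BorelSpace (Matrix.unitaryGroup (Fin N) ℂ)]
    (μ : Measure (Matrix.unitaryGroup (Fin N) ℂ))
    [IsProbabilityMeasure μ]
    (hinv : ∀ V : Matrix.unitaryGroup (Fin N) ℂ,
      MeasurePreserving (fun U => V * U) μ μ) :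
    (∫ U, Matrix.det (1 - (U : Matrix (Fin N) (Fin N) ℂ)) *
        (starRingEnd ℂ) (detOneSubWedgeThree N U) ∂μ) = ((N / 3 : ℕ) : ℂ) + 1 ∧
    ∀ g : ℕ, N = 3 * g →
      (∫ U, Matrix.det (1 - (U : Matrix (Fin N) (Fin N) ℂ)) *
          (starRingEnd ℂ) (detOneSubWedgeThree N U) ∂μ) = (g : ℂ) + 1 := by
  have hζ := Complex.isPrimitiveRoot_exp (N + 1) N.succ_ne_zero
  have hmem := UnitaryIntegral.aeval_specializationPoint_mem hζ
    (UnitaryIntegral.wedgeThreePolynomial_isSymmetric N)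
  have hintegral :=
    UnitaryIntegral.integral_det_one_sub_mul_conj_of_mem_signSpecialization hinv hmem
  rw [UnitaryIntegral.aeval_specializationPoint, Fintype.card_fin,
    UnitaryIntegral.sum_coeff_aeval_wedgeThreePolynomial hζ] at hintegral
  simp only [UnitaryIntegral.aeval_eigenvalue_wedgeThreePolynomial] at hintegral
  refine ⟨hintegral, fun g hg => ?_⟩
  rw [hintegral, hg, Nat.mul_div_cancel_left g (by norm_num)]
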